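/- arXiv:1004.3411 — 3 statements merged into one kernel-verified Lean document; each statement's English description precedes it below -/
import Mathlib

section
/- Let n > 2 and G = (ℤ/nℤ)*. For x ∈ (1/n)ℤ/ℤ define the Stickelberger element S(x) = ∑_{g ∈ G} B₁(g·x)·σ_g in the group algebra ℂ[G]. Let U be the ℂ-span of all S(x). Then the dimension of U equals φ(n)/2. -/
open Classical in
/-- The first periodic Bernoulli function. -/
noncomputable def B1 (x : ℝ) : ℝ := if ∃ m : ℤ, x = (m : ℝ) then 0 else Int.fract x - 1/2

open Classical in
/-- The Stickelberger element `S(t/n) = ∑_{g ∈ (ℤ/n)ˣ} B₁(g·t/n)·σ_g` in `ℂ[(ℤ/n)ˣ]`. -/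
noncomputable def stickelberger (n : ℕ) [NeZero n] (t : ZMod n) :
    MonoidAlgebra ℂ (ZMod n)ˣ :=
  ∑ g : (ZMod n)ˣ,
    MonoidAlgebra.single g
      ((B1 ((((g : ZMod n).val * t.val : ℕ) : ℝ) / (n : ℝ)) : ℝ) : ℂ)

/-! Identify `ℂ[(ℤ/n)ˣ]` with the functions on `(ℤ/n)ˣ`, so that `S(t/n)` becomes the translate
`g ↦ f (g t)` of the sawtooth `f j = B₁(j / n)`. For any `f`, the translates span the same space as
the Dirichlet characters `χ` for which the `χ`-isotypic part of `f` is nonzero, and these characters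
are linearly independent. For the sawtooth they are exactly the odd characters, of which there are
`φ(n) / 2`. Even characters drop out by parity. Odd ones all occur: the discrete Fourier transform
of the sawtooth is a cotangent, that is, a value of the odd Hurwitz zeta function at `s = 1`, so the
Fourier transform of the `χ`-isotypic part, evaluated at `1`, is a nonzero multiple of `L(1, χ)`. -/

open Complex Filter Set Topology
open scoped Real ZMod

section Cotangent

theorem tendsto_sum_one_div_add_sub_one_div_one_sub {z : ℂ} (hz : z ∈ integerComplement) :
    Tendsto (fun N : ℕ ↦ ∑ k ∈ Finset.range N, (1 / (k + z) - 1 / (k + 1 - z))) atTop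
      (𝓝 (π * cot (π * z))) := by
  have sum_eq (N : ℕ) : ∑ k ∈ Finset.range N, (1 / (k + z) - 1 / (k + 1 - z)) =
      ∑ k ∈ Finset.range N, cotTerm z k + 1 / z - (N + z)⁻¹ := by
    induction N with
    | zero => simp
    | succ N ih =>
      rw [Finset.sum_range_succ, Finset.sum_range_succ, ih, cotTerm, ← neg_sub (N + 1 : ℂ) z,
        one_div_neg_eq_neg_one_div]
      push_cast
      ring
  have inv_tendsto : Tendsto (fun N : ℕ ↦ ((N : ℂ) + z)⁻¹) atTop (𝓝 0) :=
    tendsto_inv₀_cobounded.comp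
      ((tendsto_add_const_cobounded z).comp tendsto_natCast_atTop_cobounded)
  simpa only [sum_eq, sub_add_cancel, sub_zero] using
    ((tendsto_logDeriv_euler_cot_sub hz).add_const (1 / z)).sub inv_tendsto

theorem ofReal_mem_integerComplement_of_mem_Ioo {a : ℝ} (ha : a ∈ Ioo 0 1) :
    (a : ℂ) ∈ integerComplement := by
  rintro ⟨m, hm⟩
  obtain rfl : (m : ℝ) = a := mod_cast hm
  have h₀ : 0 < m := mod_cast ha.1
  have h₁ : m < 1 := mod_cast ha.2
  lia

end Cotangent

section HurwitzZetaOdd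

theorem norm_ofReal_cpow_sub_ofReal_cpow_le {c x y : ℝ} {r : ℂ} (hc : 0 < c) (hr : r.re ≤ 1)
    (hx : c ≤ x) (hy : c ≤ y) :
    ‖(x : ℂ) ^ r - (y : ℂ) ^ r‖ ≤ ‖r‖ * c ^ (r.re - 1) * |x - y| := by
  rcases eq_or_ne r 0 with rfl | hr0
  · simp
  refine (convex_Ici c).norm_image_sub_le_of_norm_hasDerivWithin_le
    (f := fun t : ℝ ↦ (t : ℂ) ^ r) (f' := fun t : ℝ ↦ r * (t : ℂ) ^ (r - 1))
    (fun t ht ↦ ?_) (fun t ht ↦ ?_) hy hx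
  · exact (hasDerivAt_ofReal_cpow_const (hc.trans_le ht).ne' hr0).hasDerivWithinAt
  · rw [norm_mul, norm_cpow_eq_rpow_re_of_pos (hc.trans_le ht), sub_re, one_re]
    exact mul_le_mul_of_nonneg_left (Real.rpow_le_rpow_of_nonpos hc ht (sub_nonpos.mpr hr))
      (norm_nonneg r)

/-- The `k`-th term of the Dirichlet series `∑ (k + a)⁻ˢ / 2 - ∑ (k + 1 - a)⁻ˢ / 2` of the odd
Hurwitz zeta function, the two series being paired so that the sum still converges at `s = 1`. -/
noncomputable def hurwitzOddTerm (a : ℝ) (s : ℂ) (k : ℕ) : ℂ :=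
  (1 / (k + a : ℂ) ^ s - 1 / (k + 1 - a : ℂ) ^ s) / 2

variable {a : ℝ}

theorem norm_hurwitzOddTerm_le {m s : ℝ} (hm : 0 < m) (hma : m ≤ a) (hma' : m ≤ 1 - a)
    (hs : s ∈ Icc 1 2) (k : ℕ) :
    ‖hurwitzOddTerm a s k‖ ≤ m ^ (-3 : ℝ) * ((k : ℝ) + 1) ^ (-2 : ℝ) := by
  have hs0 : 0 ≤ s := zero_le_one.trans hs.1
  have hmk : m * (k + 1) ≤ k + m := by nlinarith
  have cpow_sub_le := norm_ofReal_cpow_sub_ofReal_cpow_le (c := m * (k + 1)) (x := k + a)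
    (y := k + 1 - a) (r := -s) (by positivity) (by simpa using by linarith)
    (by linarith) (by linarith)
  rw [norm_neg, norm_real, Real.norm_of_nonneg hs0, ← ofReal_neg, ofReal_re,
    Real.mul_rpow hm.le (by positivity)] at cpow_sub_le
  have dist_le : |k + a - (k + 1 - a)| ≤ 1 := abs_le.mpr ⟨by linarith, by linarith⟩
  have m_rpow_le : m ^ (-s - 1) ≤ m ^ (-3 : ℝ) :=
    Real.rpow_le_rpow_of_exponent_ge hm (by linarith) (by linarith [hs.2])
  have k_rpow_le : ((k : ℝ) + 1) ^ (-s - 1) ≤ (k + 1) ^ (-2 : ℝ) :=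
    Real.rpow_le_rpow_of_exponent_le (by linarith) (by linarith [hs.1])
  calc ‖hurwitzOddTerm a s k‖
      = ‖((k + a : ℝ) : ℂ) ^ ((-s : ℝ) : ℂ) - ((k + 1 - a : ℝ) : ℂ) ^ ((-s : ℝ) : ℂ)‖ / 2 := by
        simp [hurwitzOddTerm, cpow_neg]
    _ ≤ 2 * (m ^ (-3 : ℝ) * (k + 1) ^ (-2 : ℝ)) * 1 / 2 := by
        grw [cpow_sub_le, m_rpow_le, k_rpow_le, dist_le, hs.2]
    _ = _ := by ring

theorem exists_summable_norm_hurwitzOddTerm_le (ha : a ∈ Ioo 0 1) :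
    ∃ u : ℕ → ℝ, Summable u ∧ ∀ k, ∀ s ∈ Icc (1 : ℝ) 2, ‖hurwitzOddTerm a s k‖ ≤ u k := by
  refine ⟨_, ?_, fun k s hs ↦ norm_hurwitzOddTerm_le (lt_min ha.1 (sub_pos.mpr ha.2))
    (min_le_left a (1 - a)) (min_le_right a (1 - a)) hs k⟩
  exact_mod_cast ((summable_nat_add_iff 1).mpr
    (Real.summable_nat_rpow.mpr (by norm_num : (-2 : ℝ) < -1))).mul_left _

theorem hurwitzZetaOdd_eq_tsum (ha : a ∈ Ioo 0 1) {s : ℝ} (hs : s ∈ Icc 1 2) :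
    HurwitzZeta.hurwitzZetaOdd a s = ∑' k, hurwitzOddTerm a s k := by
  obtain ⟨u, hu, hle⟩ := exists_summable_norm_hurwitzOddTerm_le ha
  have agree : EqOn (fun s : ℝ ↦ HurwitzZeta.hurwitzZetaOdd a s)
      (fun s : ℝ ↦ ∑' k, hurwitzOddTerm a s k) (Ioc 1 2) := fun s hs ↦
    (HurwitzZeta.hasSum_nat_hurwitzZetaOdd_of_mem_Icc (Ioo_subset_Icc_self ha)
      (by simpa using hs.1)).tsum_eq.symm
  have continuous_zeta : Continuous fun s : ℝ ↦ HurwitzZeta.hurwitzZetaOdd a s :=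
    (HurwitzZeta.differentiable_hurwitzZetaOdd a).continuous.comp continuous_ofReal
  have continuous_term (k : ℕ) : Continuous fun s : ℝ ↦ hurwitzOddTerm a s k := by
    have hk : (0 : ℝ) ≤ k := k.cast_nonneg
    have h₁ : (k + a : ℂ) ≠ 0 := mod_cast (add_pos_of_nonneg_of_pos hk ha.1).ne'
    have h₂ : (k + 1 - a : ℂ) ≠ 0 := mod_cast (by linarith [ha.2] : 0 < k + 1 - a).ne'
    simp only [hurwitzOddTerm, one_div, ← cpow_neg]
    exact ((continuous_ofReal.neg.const_cpow (.inl h₁)).sub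
      (continuous_ofReal.neg.const_cpow (.inl h₂))).div_const 2
  refine agree.of_subset_closure continuous_zeta.continuousOn
    (continuousOn_tsum (fun k ↦ (continuous_term k).continuousOn) hu hle)
    Ioc_subset_Icc_self ?_ hs
  rw [closure_Ioc one_lt_two.ne]

theorem hurwitzZetaOdd_one (ha : a ∈ Ioo 0 1) :
    HurwitzZeta.hurwitzZetaOdd a 1 = π / 2 * cot (π * a) := by
  have one_mem : (1 : ℝ) ∈ Icc 1 2 := left_mem_Icc.mpr one_le_two
  obtain ⟨u, hu, hle⟩ := exists_summable_norm_hurwitzOddTerm_le ha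
  have tendsto_zeta := (hu.of_norm_bounded (hle · 1 one_mem)).hasSum.tendsto_sum_nat
  rw [← hurwitzZetaOdd_eq_tsum ha one_mem, ofReal_one] at tendsto_zeta
  have tendsto_cot := (tendsto_sum_one_div_add_sub_one_div_one_sub
    (ofReal_mem_integerComplement_of_mem_Ioo ha)).div_const 2
  rw [div_mul_eq_mul_div]
  exact tendsto_nhds_unique tendsto_zeta
    (by simpa only [hurwitzOddTerm, cpow_one, Finset.sum_div] using tendsto_cot)

end HurwitzZetaOdd

section Sawtooth

theorem B1_eq_ite (x : ℝ) : B1 x = if Int.fract x = 0 then 0 else Int.fract x - 1 / 2 := by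
  have : (∃ m : ℤ, x = m) ↔ Int.fract x = 0 := by
    simp only [Int.fract_eq_zero_iff, mem_range, eq_comm]
  simp only [B1, this]

theorem B1_periodic : Function.Periodic B1 1 := fun x ↦ by
  simp only [B1_eq_ite, Int.fract_add_one]

theorem B1_odd : Function.Odd B1 := fun x ↦ by
  rcases eq_or_ne (Int.fract x) 0 with hx | hx
  · simp [B1_eq_ite, Int.fract_neg_eq_zero, hx]
  · rw [B1_eq_ite, B1_eq_ite, if_neg hx, if_neg (Int.fract_neg_eq_zero.not.mpr hx),
      Int.fract_neg hx]
    ring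

variable {n : ℕ} [NeZero n]

/-- The function `j ↦ B₁(j / n)` on `ZMod n`, that is, `B₁` restricted to `(1/n)ℤ/ℤ`. -/
noncomputable def sawtooth (j : ZMod n) : ℂ :=
  (B1_periodic.lift (ZMod.toAddCircle j) : ℝ)

theorem sawtooth_natCast (k : ℕ) : sawtooth (k : ZMod n) = (B1 (k / n) : ℝ) := by
  rw [sawtooth, ZMod.toAddCircle_natCast, Function.Periodic.lift_coe]

theorem sawtooth_odd : Function.Odd (sawtooth (n := n)) := fun j ↦ by
  obtain ⟨k, rfl⟩ := ZMod.natCast_zmod_surjective j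
  rw [sawtooth, map_neg, ZMod.toAddCircle_natCast, sawtooth_natCast, ← AddCircle.coe_neg,
    Function.Periodic.lift_coe, B1_odd, ofReal_neg]

theorem sawtooth_eq (j : ZMod n) :
    sawtooth j = (j.val : ℂ) / n - 1 / 2 + if j = 0 then 1 / 2 else 0 := by
  have fract_eq : Int.fract ((j.val : ℝ) / n) = j.val / n := by
    rw [Int.fract_div_natCast_eq_div_natCast_mod, Nat.mod_eq_of_lt j.val_lt]
  nth_rw 1 [← ZMod.natCast_zmod_val j]
  rw [sawtooth_natCast, B1_eq_ite, fract_eq]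
  rcases eq_or_ne j 0 with rfl | hj
  · simp
  · simp [-ZMod.natCast_val, hj, NeZero.ne n]

end Sawtooth

section DiscreteFourier

theorem sub_one_mul_sum_range_mul_pow {R : Type*} [CommRing R] (x : R) (m : ℕ) :
    (x - 1) * ∑ k ∈ Finset.range m, k * x ^ k =
      m * x ^ m - x * ∑ k ∈ Finset.range m, x ^ k := by
  induction m with
  | zero => simp
  | succ m ih =>
    rw [Finset.sum_range_succ, Finset.sum_range_succ, mul_add, ih]
    push_cast
    ring

theorem sum_range_pow_mul_div_sub_half {K : Type*} [Field K] {x : K} {m : ℕ} (hm : (m : K) ≠ 0)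
    (hx : x ≠ 1) (hxm : x ^ m = 1) :
    ∑ k ∈ Finset.range m, x ^ k * (k / m - 1 / 2) = 1 / (x - 1) := by
  have hx' : x - 1 ≠ 0 := sub_ne_zero.mpr hx
  have sum_pow : ∑ k ∈ Finset.range m, x ^ k = 0 := by
    rw [geom_sum_eq hx, hxm, sub_self, zero_div]
  have sum_mul_pow := sub_one_mul_sum_range_mul_pow x m
  rw [sum_pow, hxm, mul_one, mul_zero, sub_zero] at sum_mul_pow
  calc ∑ k ∈ Finset.range m, x ^ k * (k / m - 1 / 2)
      = (∑ k ∈ Finset.range m, k * x ^ k) / m - (∑ k ∈ Finset.range m, x ^ k) * (1 / 2) := by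
        rw [Finset.sum_div, Finset.sum_mul, ← Finset.sum_sub_distrib]
        congr! 1
        ring
    _ = 1 / (x - 1) := by
        rw [sum_pow, zero_mul, sub_zero, div_eq_div_iff hm hx', mul_comm, sum_mul_pow, one_mul]

variable {n : ℕ} [NeZero n]

theorem sum_zmod_val {M : Type*} [AddCommMonoid M] (f : ℕ → M) :
    ∑ j : ZMod n, f j.val = ∑ k ∈ Finset.range n, f k := by
  cases n with
  | zero => exact absurd rfl (NeZero.ne 0)
  | succ n => exact Fin.sum_univ_eq_sum_range f (n + 1)

theorem dft_sawtooth {j : ZMod n} (hj : j ≠ 0) :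
    𝓕 sawtooth j = I / 2 * cot (π * (j.val / n)) := by
  set x : ℂ := ZMod.stdAddChar (-j) with hx
  have stdAddChar_eq (t : ZMod n) : (ZMod.stdAddChar (-(t * j)) : ℂ) = x ^ t.val := by
    rw [hx, ← AddChar.map_nsmul_eq_pow, nsmul_eq_mul, ZMod.natCast_zmod_val, mul_neg]
  have x_ne_one : x ≠ 1 := by
    rw [hx, ← AddChar.map_zero_eq_one (ZMod.stdAddChar (N := n)),
      ZMod.injective_stdAddChar.ne_iff]
    exact neg_ne_zero.mpr hj
  have x_pow : x ^ n = 1 := by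
    rw [hx, ← AddChar.map_nsmul_eq_pow, nsmul_eq_mul, ZMod.natCast_self, zero_mul,
      AddChar.map_zero_eq_one]
  have exp_eq : cexp (2 * π * I * (j.val / n)) = x⁻¹ := by
    rw [hx, AddChar.map_neg_eq_inv, inv_inv]
    simpa [-ZMod.natCast_val, ZMod.natCast_zmod_val, mul_div_assoc] using
      (ZMod.stdAddChar_coe (N := n) j.val).symm
  have x_ne_zero : x ≠ 0 := fun h ↦ by simp [h, NeZero.ne n] at x_pow
  have x_sub_one_ne_zero : x - 1 ≠ 0 := sub_ne_zero.mpr x_ne_one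
  calc 𝓕 sawtooth j = ∑ t : ZMod n, x ^ t.val * ((t.val : ℂ) / n - 1 / 2) + 1 / 2 := by
        simp [ZMod.dft_apply, stdAddChar_eq, sawtooth_eq, mul_add, Finset.sum_add_distrib]
    _ = 1 / (x - 1) + 1 / 2 := by
        rw [sum_zmod_val fun k ↦ x ^ k * ((k : ℂ) / n - 1 / 2),
          sum_range_pow_mul_div_sub_half (NeZero.ne _) x_ne_one x_pow]
    _ = I / 2 * cot (π * (j.val / n)) := by
        rw [cot_pi_eq_exp_ratio, exp_eq]
        field

end DiscreteFourier

section LFunction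

variable {n : ℕ} [NeZero n]

theorem hurwitzZetaOdd_toAddCircle_one (j : ZMod n) :
    HurwitzZeta.hurwitzZetaOdd (ZMod.toAddCircle j) 1 = -(π * I) * 𝓕 sawtooth j := by
  rcases eq_or_ne j 0 with rfl | hj
  · have zeta_eq_zero : HurwitzZeta.hurwitzZetaOdd 0 1 = 0 :=
      self_eq_neg.mp (by simpa using HurwitzZeta.hurwitzZetaOdd_neg 0 1)
    rw [map_zero, zeta_eq_zero, ZMod.dft_apply_zero, sawtooth_odd.sum_eq_zero, mul_zero]
  · have hn : (0 : ℝ) < n := Nat.cast_pos.mpr (NeZero.pos n)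
    have mem_Ioo : (j.val / n : ℝ) ∈ Ioo 0 1 :=
      ⟨div_pos (Nat.cast_pos.mpr (ZMod.val_pos.mpr hj)) hn,
        (div_lt_one hn).mpr (Nat.cast_lt.mpr j.val_lt)⟩
    rw [ZMod.toAddCircle_apply, hurwitzZetaOdd_one mem_Ioo, dft_sawtooth hj]
    push_cast
    linear_combination (π / 2 * cot (π * (j.val / n))) * I_sq

theorem LFunction_one_of_odd {Φ : ZMod n → ℂ} (hΦ : Φ.Odd) :
    ZMod.LFunction Φ 1 = -(π * I / n) * ∑ j, Φ j * 𝓕 sawtooth j := by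
  simp only [ZMod.LFunction_def_odd hΦ, hurwitzZetaOdd_toAddCircle_one, cpow_neg_one,
    Finset.mul_sum]
  congr! 1
  ring

end LFunction

section IsotypicPart

theorem sum_mulChar_mul_eq_sum_units {R R' : Type*} [CommMonoid R] [Fintype R] [Fintype Rˣ]
    [CommSemiring R'] (χ : MulChar R R') (f : R → R') :
    ∑ a, χ a * f a = ∑ u : Rˣ, χ u * f u :=
  (Fintype.sum_of_injective Units.val Units.val_injective _ _
    (fun a ha ↦ by rw [χ.map_nonunit ha, zero_mul]) fun _ ↦ rfl).symm

variable {n : ℕ} [NeZero n]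

/-- The projection of `f : ZMod n → ℂ` to the `χ`-isotypic component for the action of `(ZMod n)ˣ`
by multiplication on the argument, up to the factor `φ(n)`. -/
noncomputable def isotypicPart (χ : DirichletCharacter ℂ n) (f : ZMod n → ℂ) (t : ZMod n) :
    ℂ :=
  ∑ h : (ZMod n)ˣ, χ⁻¹ h * f (h * t)

variable (χ : DirichletCharacter ℂ n) (f : ZMod n → ℂ)

theorem isotypicPart_unit_mul (g : (ZMod n)ˣ) (t : ZMod n) :
    isotypicPart χ f (g * t) = χ g * isotypicPart χ f t := by
  have χ_mul_inv : χ g * χ⁻¹ g = 1 := by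
    rw [← MulChar.mul_apply, mul_inv_cancel, MulChar.one_apply_coe]
  rw [isotypicPart, isotypicPart, Finset.mul_sum]
  refine Fintype.sum_equiv (Equiv.mulRight g) _ _ fun h ↦ ?_
  rw [Equiv.coe_mulRight, Units.val_mul, map_mul, mul_assoc (h : ZMod n)]
  linear_combination -(χ⁻¹ h * f (h * (g * t))) * χ_mul_inv

theorem dft_isotypicPart_one : 𝓕 (isotypicPart χ f) 1 = ∑ j, χ j * 𝓕 f j := by
  have part_eq : isotypicPart χ f =
      ∑ h : (ZMod n)ˣ, χ⁻¹ (h : ZMod n) • fun t ↦ f (h * t) := by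
    ext t
    simp only [isotypicPart, Finset.sum_apply, Pi.smul_apply, smul_eq_mul]
  rw [part_eq, map_sum, Finset.sum_apply, sum_mulChar_mul_eq_sum_units]
  refine Fintype.sum_equiv (Equiv.inv _) _ _ fun h ↦ ?_
  rw [map_smul, Pi.smul_apply, ZMod.dft_comp_unitMul, mul_one, smul_eq_mul, MulChar.inv_apply,
    Ring.inverse_unit, Equiv.inv_apply]

theorem isotypicPart_sawtooth_ne_zero_of_odd {χ : DirichletCharacter ℂ n} (hχ : χ.Odd) :
    isotypicPart χ sawtooth ≠ 0 := by
  intro part_eq_zero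
  have χ_ne_one : χ ≠ 1 := by
    rintro rfl
    have := hχ.symm.trans (MulChar.one_apply isUnit_one.neg)
    norm_num at this
  refine DirichletCharacter.LFunction_apply_one_ne_zero χ_ne_one ?_
  rw [DirichletCharacter.LFunction, LFunction_one_of_odd hχ.to_fun, ← dft_isotypicPart_one,
    part_eq_zero, map_zero, Pi.zero_apply, mul_zero]

theorem isotypicPart_odd {f : ZMod n → ℂ} (hf : f.Odd) : (isotypicPart χ f).Odd :=
  fun t ↦ by simp only [isotypicPart, mul_neg, hf _, Finset.sum_neg_distrib]

theorem isotypicPart_eq_zero_of_odd_of_even {χ : DirichletCharacter ℂ n} {f : ZMod n → ℂ}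
    (hf : f.Odd) (hχ : χ.Even) : isotypicPart χ f = 0 := by
  ext t
  have h := isotypicPart_unit_mul χ f (-1) t
  rw [Units.val_neg, Units.val_one, hχ, one_mul, neg_one_mul, isotypicPart_odd χ hf] at h
  exact neg_eq_self.mp h

theorem isotypicPart_sawtooth_ne_zero_iff {χ : DirichletCharacter ℂ n} :
    isotypicPart χ sawtooth ≠ 0 ↔ χ.Odd := by
  refine ⟨fun h ↦ ?_, isotypicPart_sawtooth_ne_zero_of_odd⟩
  exact χ.even_or_odd.resolve_left fun hχ ↦
    h (isotypicPart_eq_zero_of_odd_of_even sawtooth_odd hχ)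

end IsotypicPart

section Translates

theorem linearIndependent_dirichletCharacter_units (n : ℕ) :
    LinearIndependent ℂ fun (χ : DirichletCharacter ℂ n) (g : (ZMod n)ˣ) ↦ χ g :=
  (linearIndependent_monoidHom (ZMod n)ˣ ℂ).comp
    (fun χ : DirichletCharacter ℂ n ↦ χ.toMonoidHom.comp (Units.coeHom (ZMod n)))
    fun _ _ h ↦ MulChar.ext fun u ↦ DFunLike.congr_fun h u

variable {n : ℕ} [NeZero n] (χ : DirichletCharacter ℂ n) (f : ZMod n → ℂ)

theorem sum_smul_translate (t : ZMod n) :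
    ∑ h : (ZMod n)ˣ, χ⁻¹ (h : ZMod n) • (fun g : (ZMod n)ˣ ↦ f (g * (h * t))) =
      isotypicPart χ f t • fun g : (ZMod n)ˣ ↦ χ g := by
  ext g
  rw [Pi.smul_apply, smul_eq_mul, mul_comm, ← isotypicPart_unit_mul, isotypicPart]
  simp only [Finset.sum_apply, Pi.smul_apply, smul_eq_mul, mul_left_comm (g : ZMod n)]

theorem totient_smul_translate (t : ZMod n) :
    (n.totient : ℂ) • (fun g : (ZMod n)ˣ ↦ f (g * t)) =
      ∑ χ : DirichletCharacter ℂ n, isotypicPart χ f t • fun g : (ZMod n)ˣ ↦ χ g := by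
  ext g
  simp only [isotypicPart, Finset.sum_apply, Pi.smul_apply, smul_eq_mul, Finset.sum_mul]
  rw [Finset.sum_comm]
  simp_rw [mul_right_comm _ (f _), ← Finset.sum_mul, MulChar.inv_apply, Ring.inverse_unit,
    ← ZMod.inv_coe_unit, DirichletCharacter.sum_char_inv_mul_char_eq ℂ (Units.isUnit _),
    Units.val_inj]
  simp

theorem span_translates_eq_span_characters :
    Submodule.span ℂ (range fun (t : ZMod n) (g : (ZMod n)ˣ) ↦ f (g * t)) =
      Submodule.span ℂ (range fun (χ : {χ : DirichletCharacter ℂ n // isotypicPart χ f ≠ 0})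
        (g : (ZMod n)ˣ) ↦ χ.1 g) := by
  apply le_antisymm <;> rw [Submodule.span_le] <;> rintro _ ⟨x, rfl⟩
  · have totient_ne_zero : (n.totient : ℂ) ≠ 0 :=
      Nat.cast_ne_zero.mpr (Nat.totient_pos.mpr (NeZero.pos n)).ne'
    rw [SetLike.mem_coe, ← Submodule.smul_mem_iff _ totient_ne_zero, totient_smul_translate]
    refine Submodule.sum_mem _ fun χ _ ↦ ?_
    by_cases hχ : isotypicPart χ f = 0
    · simp [hχ]
    · exact Submodule.smul_mem _ _ (Submodule.subset_span ⟨⟨χ, hχ⟩, rfl⟩)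
  · obtain ⟨χ, hχ⟩ := x
    obtain ⟨t, ht⟩ := Function.ne_iff.mp hχ
    rw [SetLike.mem_coe, ← Submodule.smul_mem_iff _ ht, ← sum_smul_translate]
    exact Submodule.sum_mem _ fun h _ ↦
      Submodule.smul_mem _ _ (Submodule.subset_span ⟨h * t, rfl⟩)

theorem finrank_span_translates :
    Module.finrank ℂ (Submodule.span ℂ (range fun (t : ZMod n) (g : (ZMod n)ˣ) ↦ f (g * t))) =
      Nat.card {χ : DirichletCharacter ℂ n // isotypicPart χ f ≠ 0} := by
  have := Fintype.ofFinite {χ : DirichletCharacter ℂ n // isotypicPart χ f ≠ 0}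
  rw [span_translates_eq_span_characters, Nat.card_eq_fintype_card]
  exact finrank_span_eq_card
    ((linearIndependent_dirichletCharacter_units n).comp _ Subtype.val_injective)

end Translates

theorem card_odd_dirichletCharacter {n : ℕ} (hn : 2 < n) :
    2 * Nat.card {χ : DirichletCharacter ℂ n // χ.Odd} = n.totient := by
  classical
  have : NeZero n := ⟨by lia⟩
  have : Fact (2 < n) := ⟨hn⟩
  have indicator_odd (χ : DirichletCharacter ℂ n) :
      χ 1 - χ (-1) = if χ.Odd then 2 else 0 := by
    rcases χ.even_or_odd with hχ | hχ
    · rw [if_neg hχ.not_odd, hχ, map_one, sub_self]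
    · rw [if_pos hχ, hχ, map_one, sub_neg_eq_add, one_add_one_eq_two]
  have totient_eq : (n.totient : ℂ) = 2 * Nat.card {χ : DirichletCharacter ℂ n // χ.Odd} :=
    calc (n.totient : ℂ) = ∑ χ : DirichletCharacter ℂ n, (χ 1 - χ (-1)) := by
          rw [Finset.sum_sub_distrib, DirichletCharacter.sum_characters_eq,
            DirichletCharacter.sum_characters_eq, if_pos rfl, if_neg ZMod.neg_one_ne_one, sub_zero]
      _ = 2 * Nat.card {χ : DirichletCharacter ℂ n // χ.Odd} := by
          rw [Nat.card_eq_fintype_card, Fintype.card_subtype, mul_comm]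
          simp only [indicator_odd, Finset.sum_ite, Finset.sum_const, nsmul_eq_mul, mul_zero,
            add_zero]
  exact_mod_cast totient_eq.symm

theorem coeff_stickelberger {n : ℕ} [NeZero n] (t : ZMod n) (g : (ZMod n)ˣ) :
    (stickelberger n t).coeff g = sawtooth (g * t : ZMod n) := by
  have sawtooth_mul (h : (ZMod n)ˣ) :
      sawtooth (h * t : ZMod n) = (B1 (((h : ZMod n).val * t.val : ℕ) / n) : ℝ) := by
    rw [← sawtooth_natCast, Nat.cast_mul, ZMod.natCast_zmod_val, ZMod.natCast_zmod_val]
  simp only [stickelberger, ← sawtooth_mul, MonoidAlgebra.coeff_sum, MonoidAlgebra.coeff_single,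
    Finsupp.finsetSum_apply, Finsupp.single_apply, Finset.sum_ite_eq', Finset.mem_univ, if_true]

theorem dim_span_stickelberger (n : ℕ) [NeZero n] (hn : 2 < n) :
    Module.finrank ℂ
      (Submodule.span ℂ (Set.range fun t : ZMod n => stickelberger n t))
      = n.totient / 2 := by
  let e : MonoidAlgebra ℂ (ZMod n)ˣ ≃ₗ[ℂ] ((ZMod n)ˣ → ℂ) :=
    (MonoidAlgebra.coeffLinearEquiv ℂ).trans (Finsupp.linearEquivFunOnFinite ℂ ℂ _)
  have e_stickelberger : e ∘ stickelberger n =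
      fun t (g : (ZMod n)ˣ) ↦ sawtooth (g * t : ZMod n) :=
    funext₂ coeff_stickelberger
  calc Module.finrank ℂ (Submodule.span ℂ (range (stickelberger n)))
      = Module.finrank ℂ (Submodule.span ℂ (range (e ∘ stickelberger n))) := by
        rw [range_comp, ← LinearEquiv.finrank_map_eq e, Submodule.map_span]; rfl
    _ = Nat.card {χ : DirichletCharacter ℂ n // isotypicPart χ sawtooth ≠ 0} := by
        rw [e_stickelberger, finrank_span_translates]
    _ = Nat.card {χ : DirichletCharacter ℂ n // χ.Odd} := by
        simp only [isotypicPart_sawtooth_ne_zero_iff]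
    _ = n.totient / 2 := by
        rw [← card_odd_dirichletCharacter hn, Nat.mul_div_cancel_left _ two_pos]
end

section
/- Let χ be an odd Dirichlet character of conductor f (i.e., χ(-1) = -1). Then the generalized Bernoulli number B_{1,χ} = ∑_{k=1}^{f} χ(k)·B₁(k/f) is nonzero. -/
/-!
By the functional equation, `L(χ⁻¹, 1) ≠ 0` forces `L(χ, 0) ≠ 0` when `χ` is primitive, so it
suffices that `L(χ, 0) = -B_{1,χ}` for odd `χ`. Since `L(χ, s)` is a combination of odd Hurwitz
zeta functions, this reduces to `ζ_odd(a, 0) = 1/2 - a` for `0 < a < 1`. For `1 < Re s`,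
`Γ(s) ζ_odd(a, s)` is the Mellin transform of
`(exp (-a t) - exp (-(1 - a) t)) / (2 (1 - exp (-t)))`, and the value at `s = 0` of such a
quotient of a Mellin transform by `Γ` is the limit of the kernel as `t → 0+`.
-/

open Set Filter Topology Asymptotics MeasureTheory HurwitzZeta

section Mellin

lemma hasMellin_exp_neg {s : ℂ} (hs : 0 < s.re) :
    HasMellin (fun t : ℝ ↦ (Real.exp (-t) : ℂ)) s (Complex.Gamma s) := by
  refine ⟨?_, ?_⟩
  · simpa only [MellinConvergent, smul_eq_mul, mul_comm] using Complex.GammaIntegral_convergent hs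
  · rw [Complex.Gamma_eq_integral hs, Complex.GammaIntegral_eq_mellin]

lemma isBigO_ofReal_exp_neg_sub_one :
    (fun t : ℝ ↦ (Real.exp (-t) : ℂ) - 1) =O[𝓝[>] 0] (fun t : ℝ ↦ t) := by
  have hderiv : HasDerivAt (fun t : ℝ ↦ (Real.exp (-t) : ℂ)) (-1) 0 := by
    simpa using ((hasDerivAt_neg (0 : ℝ)).exp).ofReal_comp
  simpa using hderiv.isBigO_sub.mono nhdsWithin_le_nhds

/-- The Mellin transform of `f` is holomorphic on `-1 < Re s`, where `1 / Γ` vanishes at `0`. -/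
lemma eq_zero_of_Gamma_mul_eq_mellin {F : ℂ → ℂ} {f : ℝ → ℂ} {σ : ℝ}
    (hF : Differentiable ℂ F) (hf : LocallyIntegrableOn f (Ioi 0))
    (hf_top : ∀ r : ℝ, f =O[atTop] (· ^ r)) (hf_zero : f =O[𝓝[>] 0] (fun t : ℝ ↦ t))
    (hmellin : ∀ s : ℂ, σ < s.re → Complex.Gamma s * F s = mellin f s) : F 0 = 0 := by
  have hdiff (s : ℂ) (hs : -1 < s.re) : DifferentiableAt ℂ (mellin f) s :=
    mellin_differentiableAt_of_isBigO_rpow hf (by simpa using hf_top (-(s.re + 1)))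
      (lt_add_one _) (by simpa using hf_zero) hs
  have hU : IsOpen {s : ℂ | -1 < s.re} := isOpen_lt continuous_const Complex.continuous_re
  have hG : DifferentiableOn ℂ (fun s ↦ (Complex.Gamma s)⁻¹ * mellin f s) {s | -1 < s.re} :=
    fun s hs ↦ ((Complex.differentiable_one_div_Gamma s).mul (hdiff s hs)).differentiableWithinAt
  have heq : EqOn F (fun s ↦ (Complex.Gamma s)⁻¹ * mellin f s) {s | max σ 0 < s.re} := by
    intro s (hs : max σ 0 < s.re)
    have hΓ := Complex.Gamma_ne_zero_of_re_pos ((le_max_right _ _).trans_lt hs)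
    exact (eq_inv_mul_iff_mul_eq₀ hΓ).mpr (hmellin s ((le_max_left _ _).trans_lt hs))
  have heqOn : EqOn F (fun s ↦ (Complex.Gamma s)⁻¹ * mellin f s) {s | -1 < s.re} := by
    refine (hF.differentiableOn.analyticOnNhd hU).eqOn_of_preconnected_of_eventuallyEq
      (hG.analyticOnNhd hU) (convex_halfSpace_re_gt (-1)).isPreconnected
      (z₀ := (max σ 0 + 1 : ℝ)) ?_ (eventually_of_mem ?_ heq)
    · simp only [mem_ofPred_eq, Complex.ofReal_re]
      linarith [le_max_right σ 0]
    · exact (isOpen_lt continuous_const Complex.continuous_re).mem_nhds (lt_add_one (max σ 0))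
  simpa using heqOn (show (0 : ℂ) ∈ {s : ℂ | -1 < s.re} by simp)

theorem eq_of_Gamma_mul_eq_mellin {F : ℂ → ℂ} {f : ℝ → ℂ} {c : ℂ} {σ : ℝ}
    (hF : Differentiable ℂ F) (hf : LocallyIntegrableOn f (Ioi 0))
    (hf_top : ∀ r : ℝ, f =O[atTop] (· ^ r)) (hf_zero : (f · - c) =O[𝓝[>] 0] (fun t : ℝ ↦ t))
    (hmellin : ∀ s : ℂ, σ < s.re → Complex.Gamma s * F s = mellin f s) : F 0 = c := by
  set g : ℝ → ℂ := fun t ↦ f t - c * Real.exp (-t) with hg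
  have hg_int : LocallyIntegrableOn g (Ioi 0) :=
    hf.sub (Continuous.locallyIntegrable (by fun_prop) |>.locallyIntegrableOn _)
  have hg_top (r : ℝ) : g =O[atTop] (· ^ r) := by
    have hexp := (isLittleO_exp_neg_mul_rpow_atTop one_pos r).isBigO
    simp only [neg_one_mul] at hexp
    exact (hf_top r).sub ((Complex.isBigO_ofReal_left.mpr hexp).const_mul_left c)
  have hg_zero : g =O[𝓝[>] 0] (fun t : ℝ ↦ t) := by
    simpa [hg, mul_sub] using hf_zero.sub (isBigO_ofReal_exp_neg_sub_one.const_mul_left c)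
  refine sub_eq_zero.mp (eq_zero_of_Gamma_mul_eq_mellin (F := fun s ↦ F s - c) (σ := max σ 0)
    (hF.sub_const c) hg_int hg_top hg_zero fun s hs ↦ ?_)
  have hs0 : 0 < s.re := (le_max_right _ _).trans_lt hs
  have hg_conv : MellinConvergent g s :=
    mellinConvergent_of_isBigO_rpow hg_int (by simpa using hg_top (-(s.re + 1)))
      (lt_add_one _) (b := -1) (by simpa using hg_zero) (by linarith)
  have hexp := hasMellin_const_smul (hasMellin_exp_neg hs0).1 c
  have hf_eq : mellin f s = mellin g s + c * Complex.Gamma s := by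
    rw [← (hasMellin_exp_neg hs0).2, ← smul_eq_mul, ← hexp.2, ← (hasMellin_add hg_conv hexp.1).2]
    simp [hg]
  linear_combination hmellin s ((le_max_left _ _).trans_lt hs) + hf_eq

end Mellin

section Kernel

/-- The function of `t` whose Mellin transform at `s` is `Γ(s) ζ_odd(a, s)`, for `0 < a < 1`. -/
noncomputable def oddExpKernel (a t : ℝ) : ℝ :=
  (Real.exp (-a * t) - Real.exp (-(1 - a) * t)) / (2 * (1 - Real.exp (-t)))

lemma hasSum_exp_neg_nat_add_mul (b : ℝ) {t : ℝ} (ht : 0 < t) :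
    HasSum (fun n : ℕ ↦ Real.exp (-(n + b) * t)) (Real.exp (-b * t) / (1 - Real.exp (-t))) := by
  have hgeom := (hasSum_geometric_of_lt_one (Real.exp_pos (-t)).le
    (Real.exp_lt_one_iff.mpr (neg_lt_zero.mpr ht))).mul_left (Real.exp (-b * t))
  refine hgeom.congr_fun fun n ↦ ?_
  rw [← Real.exp_nat_mul, ← Real.exp_add]
  ring_nf

lemma hasSum_int_oddExpKernel {a t : ℝ} (ha : a ∈ Ioo 0 1) (ht : 0 < t) :
    HasSum (fun n : ℤ ↦ (SignType.sign (n + a) / 2 : ℝ) * Real.exp (-|n + a| * t))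
      (oddExpKernel a t) := by
  have hpos := (hasSum_exp_neg_nat_add_mul a ht).div_const 2
  have hneg := (hasSum_exp_neg_nat_add_mul (1 - a) ht).div_const (-2)
  have hvalue : oddExpKernel a t = Real.exp (-a * t) / (1 - Real.exp (-t)) / 2 +
      Real.exp (-(1 - a) * t) / (1 - Real.exp (-t)) / (-2) := by
    rw [oddExpKernel, div_mul_eq_div_div_swap]; ring
  rw [hvalue]
  refine HasSum.of_nat_of_neg_add_one (hpos.congr_fun fun n ↦ ?_) (hneg.congr_fun fun n ↦ ?_)
  · have h : 0 < (n : ℝ) + a := by linarith [ha.1, n.cast_nonneg (α := ℝ)]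
    push_cast
    rw [sign_pos h, abs_of_pos h]
    simp only [SignType.coe_one]
    ring
  · have h : -((n : ℝ) + 1) + a < 0 := by linarith [ha.2, n.cast_nonneg (α := ℝ)]
    push_cast
    rw [sign_neg h, abs_of_neg h]
    simp only [SignType.coe_neg_one]
    ring_nf

lemma Gamma_mul_hurwitzZetaOdd {a : ℝ} (ha : a ∈ Ioo 0 1) {s : ℂ} (hs : 1 < s.re) :
    Complex.Gamma s * hurwitzZetaOdd a s = mellin (fun t ↦ (oddExpKernel a t : ℂ)) s := by
  have hne (n : ℤ) : (n : ℝ) + a ≠ 0 := by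
    intro h
    have hlt : (-1 : ℝ) < n := by linarith [ha.2]
    have hgt : (n : ℝ) < 0 := by linarith [ha.1]
    norm_cast at hlt hgt
    lia
  have hkernel (t : ℝ) (ht : t ∈ Ioi 0) :
      HasSum (fun n : ℤ ↦ (SignType.sign (n + a) / 2 : ℂ) * Real.exp (-|n + a| * t))
        (oddExpKernel a t : ℂ) := by
    refine (Complex.hasSum_ofReal.mpr (hasSum_int_oddExpKernel ha ht)).congr_fun fun n ↦ ?_
    rcases (hne n).lt_or_gt with h | h
    · simp [sign_neg h]
    · simp [sign_pos h]
  have hsummable : Summable fun n : ℤ ↦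
      ‖(SignType.sign (n + a) / 2 : ℂ)‖ / |n + a| ^ s.re := by
    refine (((Real.summable_one_div_int_add_rpow a s.re).mpr hs).div_const 2).congr fun n ↦ ?_
    rcases (hne n).lt_or_gt with h | h
    · simp [sign_neg h, div_eq_inv_mul, mul_comm]
    · simp [sign_pos h, div_eq_inv_mul, mul_comm]
  refine ((hasSum_int_hurwitzZetaOdd a hs).mul_left (Complex.Gamma s)).unique ?_
  refine (hasSum_mellin (fun n ↦ Or.inr (abs_pos.mpr (hne n))) (by linarith) hkernel
    hsummable).congr_fun fun n ↦ ?_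
  ring

lemma continuousOn_oddExpKernel (a : ℝ) : ContinuousOn (oddExpKernel a) (Ioi 0) := by
  refine ContinuousOn.div (by fun_prop) (by fun_prop) fun t (ht : 0 < t) ↦ ?_
  have : Real.exp (-t) < 1 := Real.exp_lt_one_iff.mpr (neg_lt_zero.mpr ht)
  linarith

lemma isBigO_rpow_oddExpKernel {a : ℝ} (ha : a ∈ Ioo 0 1) (r : ℝ) :
    oddExpKernel a =O[atTop] (· ^ r) := by
  have hnum : (fun t ↦ Real.exp (-a * t) - Real.exp (-(1 - a) * t)) =O[atTop] (· ^ r) :=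
    (isLittleO_exp_neg_mul_rpow_atTop ha.1 r).isBigO.sub
      (isLittleO_exp_neg_mul_rpow_atTop (sub_pos.mpr ha.2) r).isBigO
  have hden : Tendsto (fun t ↦ (2 * (1 - Real.exp (-t)))⁻¹) atTop (𝓝 (2 * (1 - 0))⁻¹) :=
    ((Real.tendsto_exp_neg_atTop_nhds_zero.const_sub 1).const_mul 2).inv₀ (by norm_num)
  simpa only [oddExpKernel, div_eq_mul_inv, mul_one] using! hnum.mul (hden.isBigO_one ℝ)

lemma isBigO_exp_neg_mul_sub_affine (b : ℝ) :
    (fun t : ℝ ↦ Real.exp (-b * t) - (1 - b * t)) =O[𝓝 0] (· ^ 2) := by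
  have hlim : Tendsto (fun t : ℝ ↦ -b * t) (𝓝 0) (𝓝 0) := by
    simpa using (continuous_const_mul (-b)).tendsto (0 : ℝ)
  have hexp := (Real.exp_sub_sum_range_isBigO_pow 2).comp_tendsto hlim
  have hsq : (fun t : ℝ ↦ (-b * t) ^ 2) =O[𝓝 0] (· ^ 2) := by
    simpa only [mul_pow] using isBigO_const_mul_self ((-b) ^ 2) (· ^ 2) (𝓝 (0 : ℝ))
  refine (hexp.trans hsq).congr_left fun t ↦ ?_
  simp [Finset.sum_range_succ, sub_eq_add_neg]

lemma isBigO_oddExpKernel_sub (a : ℝ) :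
    (fun t ↦ oddExpKernel a t - (1 / 2 - a)) =O[𝓝[>] 0] (fun t ↦ t) := by
  have hnum : (fun t ↦ Real.exp (-a * t) - Real.exp (-(1 - a) * t) -
      (1 - 2 * a) * (1 - Real.exp (-t))) =O[𝓝[>] 0] (fun t : ℝ ↦ t ^ 2) := by
    refine ((((isBigO_exp_neg_mul_sub_affine a).sub (isBigO_exp_neg_mul_sub_affine (1 - a))).add
      ((isBigO_exp_neg_mul_sub_affine 1).const_mul_left (1 - 2 * a))).mono
      nhdsWithin_le_nhds).congr_left fun t ↦ ?_
    ring_nf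
  have hden : (fun t ↦ (2 * (1 - Real.exp (-t)))⁻¹) =O[𝓝[>] 0] (fun t : ℝ ↦ t⁻¹) := by
    have hderiv : HasDerivAt (fun t : ℝ ↦ 2 * (1 - Real.exp (-t))) 2 0 := by
      simpa using (((hasDerivAt_neg (0 : ℝ)).exp).const_sub 1).const_mul 2
    have hid : (fun t : ℝ ↦ t) =O[𝓝[>] 0] (fun t ↦ 2 * (1 - Real.exp (-t))) := by
      have hsub := (HasDerivAtFilter.isTheta_sub hderiv two_ne_zero).isBigO_symm.comp_tendsto
        (tendsto_id.prodMk tendsto_const_pure)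
      simpa [Function.comp_def] using hsub.mono nhdsWithin_le_nhds
    refine hid.inv_rev ?_
    filter_upwards [self_mem_nhdsWithin] with t (ht : 0 < t) h0 using absurd h0 ht.ne'
  refine (hnum.mul hden).congr' ?_ ?_
  · filter_upwards [self_mem_nhdsWithin] with t (ht : 0 < t)
    have h : 1 - Real.exp (-t) ≠ 0 :=
      sub_ne_zero.mpr (Real.exp_lt_one_iff.mpr (neg_lt_zero.mpr ht)).ne'
    rw [oddExpKernel]
    field_simp
  · filter_upwards [self_mem_nhdsWithin] with t (ht : 0 < t)
    field_simp

end Kernel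

theorem hurwitzZetaOdd_apply_zero_of_mem_Ioo {a : ℝ} (ha : a ∈ Ioo 0 1) :
    hurwitzZetaOdd a 0 = 1 / 2 - a := by
  refine eq_of_Gamma_mul_eq_mellin (differentiable_hurwitzZetaOdd a)
    (f := fun t ↦ (oddExpKernel a t : ℂ)) ?_ (fun r ↦ ?_) ?_
    fun s hs ↦ Gamma_mul_hurwitzZetaOdd ha hs
  · exact (Complex.continuous_ofReal.comp_continuousOn
      (continuousOn_oddExpKernel a)).locallyIntegrableOn measurableSet_Ioi
  · exact Complex.isBigO_ofReal_left.mpr (isBigO_rpow_oddExpKernel ha r)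
  · have := Complex.isBigO_ofReal_left.mpr (isBigO_oddExpKernel_sub a)
    simpa using this

theorem hurwitzZetaOdd_apply_zero (a : ℝ) : hurwitzZetaOdd a 0 = -B1 a := by
  rw [B1]
  split_ifs with ha
  · obtain ⟨m, rfl⟩ := ha
    have hm : ((m : ℝ) : UnitAddCircle) = 0 := AddCircle.coe_eq_zero_iff _ |>.mpr ⟨m, by simp⟩
    have hodd := hurwitzZetaOdd_neg 0 0
    rw [neg_zero, self_eq_neg] at hodd
    simp [hm, hodd]
  · have hfract : Int.fract a ∈ Ioo 0 1 :=
      ⟨Int.fract_pos.mpr fun h ↦ ha ⟨_, h⟩, Int.fract_lt_one a⟩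
    rw [← AddCircle.coe_fract, hurwitzZetaOdd_apply_zero_of_mem_Ioo hfract]
    push_cast
    ring

lemma sum_Icc_one_eq_sum_zmod {M : Type*} [AddCommMonoid M] {N : ℕ} [NeZero N] (G : ZMod N → M) :
    ∑ k ∈ Finset.Icc 1 N, G k = ∑ j, G j := by
  refine Finset.sum_nbij (fun k ↦ (k : ZMod N)) (fun _ _ ↦ Finset.mem_univ _) ?_ ?_
    fun _ _ ↦ rfl
  · intro k hk l hl hkl
    rw [Finset.coe_Icc, mem_Icc] at hk hl
    refine ((ZMod.natCast_eq_natCast_iff _ _ _).mp hkl).eq_of_abs_lt ?_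
    rw [abs_lt]
    lia
  · intro j _
    rcases eq_or_ne j 0 with rfl | hj
    · exact ⟨N, by simp [NeZero.one_le], ZMod.natCast_self N⟩
    · have hval : 1 ≤ j.val := Nat.one_le_iff_ne_zero.mpr ((ZMod.val_ne_zero j).mpr hj)
      exact ⟨j.val, by simp [hval, j.val_le], ZMod.natCast_zmod_val j⟩

theorem LFunction_apply_zero_of_odd {N : ℕ} [NeZero N] {Φ : ZMod N → ℂ} (hΦ : Φ.Odd) :
    ZMod.LFunction Φ 0 = -∑ k ∈ Finset.Icc 1 N, Φ k * B1 (k / N) := by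
  calc ZMod.LFunction Φ 0
      = ∑ j : ZMod N, Φ j * hurwitzZetaOdd (ZMod.toAddCircle j) 0 := by
        simp [ZMod.LFunction_def_odd hΦ]
    _ = ∑ k ∈ Finset.Icc 1 N, Φ k * hurwitzZetaOdd (ZMod.toAddCircle (k : ZMod N)) 0 :=
        (sum_Icc_one_eq_sum_zmod _).symm
    _ = -∑ k ∈ Finset.Icc 1 N, Φ k * B1 (k / N) := by
        simp only [ZMod.toAddCircle_natCast, hurwitzZetaOdd_apply_zero, mul_neg,
          Finset.sum_neg_distrib]

theorem completedLFunction_apply_zero_ne_zero {N : ℕ} [NeZero N] {χ : DirichletCharacter ℂ N}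
    (hprim : χ.IsPrimitive) (hχ : χ ≠ 1) : χ.completedLFunction 0 ≠ 0 := by
  have hprim_inv : χ⁻¹.IsPrimitive := by
    rwa [DirichletCharacter.isPrimitive_def, DirichletCharacter.conductor_inv]
  intro hzero
  have hone : χ⁻¹.completedLFunction 1 = 0 := by
    simpa [hzero] using hprim_inv.completedLFunction_one_sub 0
  refine DirichletCharacter.LFunction_apply_one_ne_zero (inv_ne_one.mpr hχ) ?_
  rw [DirichletCharacter.LFunction_eq_completed_div_gammaFactor _ _ (.inl one_ne_zero), hone,
    zero_div]

theorem LFunction_apply_zero_ne_zero_of_odd {N : ℕ} [NeZero N] {χ : DirichletCharacter ℂ N}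
    (hprim : χ.IsPrimitive) (hodd : χ.Odd) : χ.LFunction 0 ≠ 0 := by
  have hχ : χ ≠ 1 := by
    rintro rfl
    exact hodd.not_even _ (MulChar.one_apply isUnit_one.neg)
  have hL : χ.LFunction 0 = χ.completedLFunction 0 := by
    simpa only [zero_add, Complex.Gammaℝ_one, div_one] using!
      ZMod.LFunction_eq_completed_div_gammaFactor_odd hodd.to_fun 0
  rw [hL]
  exact completedLFunction_apply_zero_ne_zero hprim hχ

theorem generalized_bernoulli_ne_zero_of_odd (f : ℕ) (hf : 0 < f)
    (χ : DirichletCharacter ℂ f) (hprim : χ.IsPrimitive) (hodd : χ (-1) = -1) :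
    ∑ k ∈ Finset.Icc 1 f, χ (k : ZMod f) * ((B1 ((k : ℝ) / (f : ℝ)) : ℝ) : ℂ) ≠ 0 := by
  have : NeZero f := ⟨hf.ne'⟩
  have hχ : χ.Odd := hodd
  refine neg_ne_zero.mp ?_
  rw [← LFunction_apply_zero_of_odd hχ.to_fun]
  exact LFunction_apply_zero_ne_zero_of_odd hprim hχ
end

section
/- Let p, q be integers greater than 1, and let Δ ⊂ ℝ^5 be the convex hull of the six points (0,0,0,0,0), (0,0,1,0,0), (1,0,0,0,0), (1,0,1,p,0), (0,1,0,0,0), (0,1,1,0,q). Then Δ is a 5-dimensional empty lattice simplex (its only lattice points are its vertices), but the group ℤ^6/(ℤ(v₁,1)+…+ℤ(v₆,1)) is isomorphic to ℤ/pℤ × ℤ/qℤ, hence not cyclic when gcd(p,q) > 1. -/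
/-!
The first three coordinates map the six vertices bijectively onto the vertices of the prism
`triangle × segment`, all of which are vertices of the unit cube `[0, 1]³`. A lattice point of the
simplex projects to a lattice point of the cube, that is, to an extreme point of it; the part of the
simplex above an extreme point is the convex hull of the vertices above it, so it is a single
vertex. The emptiness thus puts no constraint on the last two coordinates, and these determine the
quotient group: the lifted vertices span the lattice given by `p ∣ y₃` and `q ∣ y₄`, where
coordinates are indexed from `0`.
-/

section ExtremeSets

variable {𝕜 E F : Type*} [Semiring 𝕜] [PartialOrder 𝕜] [AddCommMonoid E] [Module 𝕜 E]
  [AddCommMonoid F] [Module 𝕜 F]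

theorem isExtreme_preimage {A B : Set F} (h : IsExtreme 𝕜 A B) (f : E →ₗ[𝕜] F) :
    IsExtreme 𝕜 (f ⁻¹' A) (f ⁻¹' B) where
  subset := Set.preimage_mono h.subset
  left_mem_of_mem_openSegment x hx y hy z hz hzxy := by
    refine h.left_mem_of_mem_openSegment hx hy hz ?_
    obtain ⟨a, b, ha, hb, hab, rfl⟩ := hzxy
    exact ⟨a, b, ha, hb, hab, by simp only [map_add, map_smul]⟩

variable [ZeroLEOneClass 𝕜]

theorem convexHull_inter_subset_of_isExtreme {s A B : Set E} (hA : Convex 𝕜 A)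
    (hB : IsExtreme 𝕜 A B) (hs : s ⊆ A) : convexHull 𝕜 s ∩ B ⊆ convexHull 𝕜 (s ∩ B) := by
  -- The points of `A` satisfying the claim form a convex set, because `B` is extreme.
  have hconv : Convex 𝕜 {x ∈ A | x ∈ B → x ∈ convexHull 𝕜 (s ∩ B)} :=
    convex_iff_openSegment_subset.2 fun x ⟨hxA, hx⟩ y ⟨hyA, hy⟩ z hz ↦
      ⟨hA.openSegment_subset hxA hyA hz, fun hzB ↦
        (convex_convexHull 𝕜 _).openSegment_subset
          (hx (hB.left_mem_of_mem_openSegment hxA hyA hzB hz))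
          (hy (hB.right_mem_of_mem_openSegment hxA hyA hzB hz)) hz⟩
  have hsub : s ⊆ {x ∈ A | x ∈ B → x ∈ convexHull 𝕜 (s ∩ B)} :=
    fun x hx ↦ ⟨hs hx, fun hxB ↦ subset_convexHull 𝕜 _ ⟨hx, hxB⟩⟩
  exact fun x ⟨hx, hxB⟩ ↦ (convexHull_min hsub hconv hx).2 hxB

theorem mem_of_mem_convexHull_of_map_mem_extremePoints {s : Set E} {A : Set F} {f : E →ₗ[𝕜] F}
    (hA : Convex 𝕜 A) (hs : Set.MapsTo f s A) (hf : Set.InjOn f s) {x : E}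
    (hx : x ∈ convexHull 𝕜 s) (hfx : f x ∈ A.extremePoints 𝕜) : x ∈ s := by
  have hfiber : x ∈ convexHull 𝕜 (s ∩ f ⁻¹' {f x}) :=
    convexHull_inter_subset_of_isExtreme (hA.linear_preimage f)
      (isExtreme_preimage (isExtreme_singleton.2 hfx) f) hs ⟨hx, rfl⟩
  have hsub : (s ∩ f ⁻¹' {f x}).Subsingleton :=
    fun a ha b hb ↦ hf ha.1 hb.1 (ha.2.trans hb.2.symm)
  rw [hsub.convex.convexHull_eq] at hfiber
  exact hfiber.1

end ExtremeSets

theorem intCast_mem_extremePoints_unitCube {κ : Type*} {m : κ → ℤ}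
    (hm : (fun k ↦ (m k : ℝ)) ∈ Set.univ.pi fun _ ↦ Set.Icc (0 : ℝ) 1) :
    (fun k ↦ (m k : ℝ)) ∈ (Set.univ.pi fun _ ↦ Set.Icc (0 : ℝ) 1).extremePoints ℝ := by
  simp only [extremePoints_pi, Set.extremePoints_Icc zero_le_one, Set.mem_univ_pi] at hm ⊢
  intro k
  have h₀ : 0 ≤ m k := by exact_mod_cast (hm k).1
  have h₁ : m k ≤ 1 := by exact_mod_cast (hm k).2
  obtain h | h : m k = 0 ∨ m k = 1 := by omega
  all_goals simp [h]

theorem mem_range_of_mem_convexHull_of_comp_mem_unitCube {ι κ n : Type*} {v : ι → n → ℤ} {e : κ → n}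
    (hcube : ∀ i k, v i (e k) ∈ Set.Icc 0 1) (hinj : Function.Injective fun i ↦ v i ∘ e)
    {x : n → ℤ} (hx : (fun j ↦ (x j : ℝ)) ∈ convexHull ℝ (Set.range fun i j ↦ (v i j : ℝ))) :
    x ∈ Set.range v := by
  let f : (n → ℝ) →ₗ[ℝ] (κ → ℝ) := LinearMap.funLeft ℝ ℝ e
  have hconv : Convex ℝ (Set.univ.pi fun _ : κ ↦ Set.Icc (0 : ℝ) 1) :=
    convex_pi fun _ _ ↦ convex_Icc 0 1
  have hmaps : Set.MapsTo f (Set.range fun i j ↦ (v i j : ℝ))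
      (Set.univ.pi fun _ ↦ Set.Icc (0 : ℝ) 1) := by
    rintro _ ⟨i, rfl⟩ k -
    change (v i (e k) : ℝ) ∈ Set.Icc 0 1
    exact ⟨mod_cast (hcube i k).1, mod_cast (hcube i k).2⟩
  have hinjOn : Set.InjOn f (Set.range fun i j ↦ (v i j : ℝ)) := by
    rintro _ ⟨i, rfl⟩ _ ⟨i', rfl⟩ h
    obtain rfl : i = i' := hinj (funext fun k ↦ Int.cast_injective (congrFun h k))
    rfl
  have hfx : f (fun j ↦ (x j : ℝ)) ∈ Set.univ.pi fun _ ↦ Set.Icc (0 : ℝ) 1 :=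
    convexHull_min hmaps (hconv.linear_preimage f) hx
  obtain ⟨i, hi⟩ := mem_of_mem_convexHull_of_map_mem_extremePoints hconv hmaps hinjOn hx
    (intCast_mem_extremePoints_unitCube hfx)
  exact ⟨i, funext fun j ↦ Int.cast_injective (congrFun hi j)⟩

/-- The point `(x, 1)`: the copy of `x` in the hyperplane of height one. -/
def heightOneLift {R : Type*} [One R] {n : ℕ} (x : Fin n → R) : Fin (n + 1) → R :=
  Fin.snoc x 1

theorem mem_span_range_heightOneLift {R ι : Type*} [Semiring R] [Fintype ι] {n : ℕ}
    {v : ι → Fin n → R} {y : Fin (n + 1) → R} :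
    y ∈ Submodule.span R (Set.range fun i ↦ heightOneLift (v i)) ↔
      ∃ c : ι → R, ∑ i, c i • v i = Fin.init y ∧ ∑ i, c i = y (Fin.last n) := by
  simp [Submodule.mem_span_range_iff_exists_fun, funext_iff, Fin.forall_fin_succ',
    heightOneLift, Fin.init]

theorem isAddCyclic_zmod_prod_iff {m n : ℕ} :
    IsAddCyclic (ZMod m × ZMod n) ↔ m.Coprime n := by
  simp only [AddGroup.isAddCyclic_prod_iff, Nat.card_zmod, ZMod.instIsAddCyclic, true_and]

/-- The vertices of the counterexample simplex, in the order of the statement. -/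
def simplexVertex (p q : ℕ) : Fin 6 → Fin 5 → ℤ :=
  ![![0, 0, 0, 0, 0], ![0, 0, 1, 0, 0], ![1, 0, 0, 0, 0], ![1, 0, 1, (p : ℤ), 0],
    ![0, 1, 0, 0, 0], ![0, 1, 1, 0, (q : ℤ)]]

/-- The vertices of the prism `triangle × segment`, in the order of the vertices of the simplex
that lie above them. -/
def prismVertex : Fin 6 → Fin 3 → ℤ :=
  ![![0, 0, 0], ![0, 0, 1], ![1, 0, 0], ![1, 0, 1], ![0, 1, 0], ![0, 1, 1]]

section Simplex

variable {p q : ℕ}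

theorem sum_smul_simplexVertex {R : Type*} [Ring R] (w : Fin 6 → R) :
    ∑ i, w i • (fun j ↦ (simplexVertex p q i j : R)) =
      ![w 2 + w 3, w 4 + w 5, w 1 + w 3 + w 5, w 3 * p, w 5 * q] := by
  ext j
  fin_cases j <;> simp [Fin.sum_univ_six, simplexVertex]

theorem affineIndependent_simplexVertex (hp : p ≠ 0) (hq : q ≠ 0) :
    AffineIndependent ℝ (fun i j ↦ (simplexVertex p q i j : ℝ)) := by
  rw [affineIndependent_iff_of_fintype]
  intro w hw hsum
  rw [Finset.weightedVSub_eq_linear_combination _ hw, sum_smul_simplexVertex] at hsum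
  have h3 : w 3 = 0 := by simpa [hp] using congrFun hsum 3
  have h5 : w 5 = 0 := by simpa [hq] using congrFun hsum 4
  have h2 : w 2 = 0 := by simpa [h3] using congrFun hsum 0
  have h4 : w 4 = 0 := by simpa [h5] using congrFun hsum 1
  have h1 : w 1 = 0 := by simpa [h3, h5] using congrFun hsum 2
  have h0 : w 0 = 0 := by simpa [Fin.sum_univ_six, h1, h2, h3, h4, h5] using hw
  intro i
  fin_cases i <;> assumption

theorem simplexVertex_comp_castLE (i : Fin 6) :
    simplexVertex p q i ∘ Fin.castLE (by decide : 3 ≤ 5) = prismVertex i := by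
  ext k
  fin_cases i <;> fin_cases k <;> rfl

theorem prismVertex_mem_Icc : ∀ i k, prismVertex i k ∈ Set.Icc 0 1 := by
  simp only [Set.mem_Icc]
  decide

theorem prismVertex_injective : Function.Injective prismVertex := by
  decide

theorem mem_range_simplexVertex_of_mem_convexHull {x : Fin 5 → ℤ}
    (hx : (fun j ↦ (x j : ℝ)) ∈
      convexHull ℝ (Set.range fun i j ↦ (simplexVertex p q i j : ℝ))) :
    x ∈ Set.range (simplexVertex p q) := by
  refine mem_range_of_mem_convexHull_of_comp_mem_unitCube (e := Fin.castLE (by decide : 3 ≤ 5))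
    (fun i k ↦ ?_) ?_ hx
  · rw [← Function.comp_apply (f := simplexVertex p q i), simplexVertex_comp_castLE]
    exact prismVertex_mem_Icc i k
  · simpa only [simplexVertex_comp_castLE] using prismVertex_injective

theorem mem_span_heightOneLift_simplexVertex {y : Fin 6 → ℤ} :
    y ∈ Submodule.span ℤ (Set.range fun i ↦ heightOneLift (simplexVertex p q i)) ↔
      (p : ℤ) ∣ y 3 ∧ (q : ℤ) ∣ y 4 := by
  have hsum (c : Fin 6 → ℤ) : ∑ i, c i • simplexVertex p q i =
      ![c 2 + c 3, c 4 + c 5, c 1 + c 3 + c 5, c 3 * p, c 5 * q] := sum_smul_simplexVertex c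
  simp only [mem_span_range_heightOneLift, hsum]
  constructor
  · rintro ⟨c, hc, -⟩
    exact ⟨Dvd.intro_left (c 3) (congrFun hc 3), Dvd.intro_left (c 5) (congrFun hc 4)⟩
  · rintro ⟨⟨k, hk⟩, l, hl⟩
    -- Coordinates `3` and `4` force the coefficients `k` and `l`; the others are then solved for.
    refine ⟨![y 5 - y 0 - y 1 - y 2 + (k + l), y 2 - (k + l), y 0 - k, k, y 1 - l, l], ?_, ?_⟩
    · ext j
      fin_cases j <;> simp [Fin.init, hk, hl, mul_comm, add_assoc]
    · simp only [Fin.sum_univ_six, Matrix.cons_val, Fin.reduceLast]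
      ring

/-- The residues of `y₃` modulo `p` and of `y₄` modulo `q`, which identify the quotient group of
the simplex. -/
def residueMap (p q : ℕ) : (Fin 6 → ℤ) →ₗ[ℤ] ZMod p × ZMod q :=
  ((Int.castAddHom (ZMod p)).toIntLinearMap ∘ₗ LinearMap.proj 3).prod
    ((Int.castAddHom (ZMod q)).toIntLinearMap ∘ₗ LinearMap.proj 4)

theorem span_heightOneLift_simplexVertex_eq_ker_residueMap :
    Submodule.span ℤ (Set.range fun i ↦ heightOneLift (simplexVertex p q i)) =
      LinearMap.ker (residueMap p q) := by
  ext y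
  simp [mem_span_heightOneLift_simplexVertex, residueMap, ZMod.intCast_zmod_eq_zero_iff_dvd]

theorem residueMap_surjective : Function.Surjective (residueMap p q) := by
  rintro ⟨a, b⟩
  obtain ⟨a, rfl⟩ := ZMod.intCast_surjective a
  obtain ⟨b, rfl⟩ := ZMod.intCast_surjective b
  exact ⟨![0, 0, 0, a, b, 0], rfl⟩

/-- The isomorphism induced by `residueMap` on the quotient group of the simplex. -/
noncomputable def quotientSpanHeightOneLiftEquiv (p q : ℕ) :
    ((Fin 6 → ℤ) ⧸ Submodule.span ℤ (Set.range fun i ↦ heightOneLift (simplexVertex p q i)))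
      ≃ₗ[ℤ] ZMod p × ZMod q :=
  (Submodule.quotEquivOfEq _ _ span_heightOneLift_simplexVertex_eq_ker_residueMap).trans
    ((residueMap p q).quotKerEquivOfSurjective residueMap_surjective)

end Simplex

/-- The counterexample simplex: for integers `p, q > 1`, the convex hull `Δ ⊂ ℝ^5` of
`(0,0,0,0,0), (0,0,1,0,0), (1,0,0,0,0), (1,0,1,p,0), (0,1,0,0,0), (0,1,1,0,q)` is a
`5`-dimensional empty lattice simplex, yet `ℤ^6/(ℤ(v₁,1)+…+ℤ(v₆,1)) ≅ ℤ/p × ℤ/q`,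
which is not cyclic when `gcd(p,q) > 1`. -/
theorem counterexample_simplex (p q : ℕ) (hp : 1 < p) (hq : 1 < q) :
    let v : Fin 6 → Fin 5 → ℤ :=
      ![![0,0,0,0,0], ![0,0,1,0,0], ![1,0,0,0,0], ![1,0,1,(p : ℤ),0],
        ![0,1,0,0,0], ![0,1,1,0,(q : ℤ)]]
    AffineIndependent ℝ (fun i => fun j => (v i j : ℝ)) ∧
    (∀ x : Fin 5 → ℤ,
      (fun j => (x j : ℝ)) ∈ convexHull ℝ (Set.range fun i => fun j => (v i j : ℝ)) →
      ∃ i, x = v i) ∧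
    Nonempty (((Fin 6 → ℤ) ⧸
        Submodule.span ℤ (Set.range fun i => fun j : Fin 6 =>
          if h : (j : ℕ) < 5 then v i ⟨j, h⟩ else 1)) ≃+ (ZMod p × ZMod q)) ∧
    (1 < Nat.gcd p q →
      ¬ IsAddCyclic ((Fin 6 → ℤ) ⧸
        Submodule.span ℤ (Set.range fun i => fun j : Fin 6 =>
          if h : (j : ℕ) < 5 then v i ⟨j, h⟩ else 1))) := by
  intro v
  have e : _ ≃+ ZMod p × ZMod q := (quotientSpanHeightOneLiftEquiv p q).toAddEquiv
  refine ⟨affineIndependent_simplexVertex (by omega) (by omega), fun x hx ↦ ?_, ⟨e⟩,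
    fun h hcyc ↦ ?_⟩
  · obtain ⟨i, hi⟩ := mem_range_simplexVertex_of_mem_convexHull hx
    exact ⟨i, hi.symm⟩
  · exact h.ne' (isAddCyclic_zmod_prod_iff.1 (e.isAddCyclic.1 hcyc))
end
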